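/- (Theorem: Bethe stationary points are AMP fixed points.) Let ρ ∈ [0,1], Δ > 0, F ∈ ℝ^{M×N}, y ∈ ℝ^M. A point (R,Σ,a,c) with all Σ_i > 0 and Δ + ∑_j F_{μj}² c_j > 0 for all μ is a stationary point of the unconstrained Bethe free energy F_B (all partial derivatives with respect to each R_i, each Σ_i, each a_i and each c_i vanish) if and only if for every i: (i) 1/Σ_i² = ∑_μ F_{μi}²/(Δ + ∑_j F_{μj}² c_j), (ii) R_i = a_i + (Σ_i²/Δ)·∑_μ F_{μi}·(y_μ − ∑_j F_{μj} a_j), (iii) a_i = f_a(R_i,Σ_i), and (iv) c_i = f_c(R_i,Σ_i); these are exactly the fixed-point equations of the AMP algorithm. -/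

import Mathlib

open MeasureTheory ProbabilityTheory

/-- The prior `P₀ = ρ·N(0,1) + (1-ρ)·δ₀`. -/
noncomputable def P0 (ρ : ℝ) : Measure ℝ :=
  ENNReal.ofReal ρ • gaussianReal 0 1 + ENNReal.ofReal (1 - ρ) • Measure.dirac 0

/-- Partition function `Z(R,Σ) = ∫ exp(-(x-R)²/(2Σ²)) dP₀(x)`. -/
noncomputable def Zpart (ρ R σ : ℝ) : ℝ :=
  ∫ x, Real.exp (-(x - R) ^ 2 / (2 * σ ^ 2)) ∂(P0 ρ)

/-- Posterior mean `f_a(R,Σ)`. -/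
noncomputable def fa (ρ R σ : ℝ) : ℝ :=
  (Zpart ρ R σ)⁻¹ * ∫ x, x * Real.exp (-(x - R) ^ 2 / (2 * σ ^ 2)) ∂(P0 ρ)

/-- Posterior variance `f_c(R,Σ)`. -/
noncomputable def fc (ρ R σ : ℝ) : ℝ :=
  (Zpart ρ R σ)⁻¹ * (∫ x, x ^ 2 * Real.exp (-(x - R) ^ 2 / (2 * σ ^ 2)) ∂(P0 ρ))
    - fa ρ R σ ^ 2

/-- The (unconstrained) Bethe free energy `F_B(R,Σ,a,c)`. -/
noncomputable def FB (ρ : ℝ) {M N : ℕ} (F : Fin M → Fin N → ℝ) (y : Fin M → ℝ)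
    (Δ : ℝ) (R Sv a c : Fin N → ℝ) : ℝ :=
  1 / (2 * Δ) * ∑ μ, (y μ - ∑ i, F μ i * a i) ^ 2
    + (M : ℝ) / 2 * Real.log (2 * Real.pi * Δ)
    + 1 / 2 * ∑ μ, Real.log (1 + (∑ i, F μ i ^ 2 * c i) / Δ)
    - ∑ i, (Real.log (Zpart ρ (R i) (Sv i)) + (c i + (a i - R i) ^ 2) / (2 * Sv i ^ 2))

/-- The prior is a probability measure. -/
lemma isProbabilityMeasure_P0 {ρ : ℝ} (hρ : ρ ∈ Set.Icc (0 : ℝ) 1) :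
    IsProbabilityMeasure (P0 ρ) := by
  constructor
  simp only [P0, Measure.add_apply, Measure.smul_apply, measure_univ, smul_eq_mul, mul_one]
  rw [← ENNReal.ofReal_add hρ.1 (by linarith [hρ.2])]
  simp

/-- `u² exp(-u²/(2σ²)) ≤ 2σ²`. -/
lemma sq_mul_exp_neg_le (u : ℝ) {σ : ℝ} (hσ : 0 < σ) :
    u ^ 2 * Real.exp (-u ^ 2 / (2 * σ ^ 2)) ≤ 2 * σ ^ 2 := by
  have hv := Real.add_one_le_exp (u ^ 2 / (2 * σ ^ 2))
  have hu : u ^ 2 ≤ 2 * σ ^ 2 * Real.exp (u ^ 2 / (2 * σ ^ 2)) := by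
    have h2 : u ^ 2 = 2 * σ ^ 2 * (u ^ 2 / (2 * σ ^ 2)) := by field_simp
    calc u ^ 2 = 2 * σ ^ 2 * (u ^ 2 / (2 * σ ^ 2)) := h2
      _ ≤ _ := by gcongr; linarith
  rw [neg_div, Real.exp_neg, ← div_eq_mul_inv]
  exact (div_le_iff₀ (Real.exp_pos _)).2 hu

lemma exp_neg_sq_le_one (u σ : ℝ) : Real.exp (-u ^ 2 / (2 * σ ^ 2)) ≤ 1 := by
  rw [Real.exp_le_one_iff, neg_div]
  exact neg_nonpos.2 (by positivity)

/-- `|u| exp(-u²/(2σ²)) ≤ 1 + 2σ²`. -/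
lemma abs_mul_exp_neg_le (u : ℝ) {σ : ℝ} (hσ : 0 < σ) :
    |u| * Real.exp (-u ^ 2 / (2 * σ ^ 2)) ≤ 1 + 2 * σ ^ 2 := by
  have hu : |u| ≤ 1 + u ^ 2 := by
    rw [← sq_abs]
    nlinarith [sq_nonneg (|u| - 1), abs_nonneg u]
  calc |u| * Real.exp (-u ^ 2 / (2 * σ ^ 2))
      ≤ (1 + u ^ 2) * Real.exp (-u ^ 2 / (2 * σ ^ 2)) := by gcongr
    _ ≤ _ := by linarith [sq_mul_exp_neg_le u hσ, exp_neg_sq_le_one u σ]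

section GaussianIntegrals

variable (μ : Measure ℝ) [IsFiniteMeasure μ] (R : ℝ)

lemma integrable_exp_neg_sq (σ : ℝ) :
    Integrable (fun x => Real.exp (-(x - R) ^ 2 / (2 * σ ^ 2))) μ := by
  refine Integrable.of_bound (by fun_prop) 1 (.of_forall fun x => ?_)
  rw [Real.norm_eq_abs, Real.abs_exp]
  exact exp_neg_sq_le_one _ _

lemma integrable_sub_mul_exp_neg_sq {σ : ℝ} (hσ : 0 < σ) :
    Integrable (fun x => (x - R) * Real.exp (-(x - R) ^ 2 / (2 * σ ^ 2))) μ := by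
  refine Integrable.of_bound (by fun_prop) (1 + 2 * σ ^ 2) (.of_forall fun x => ?_)
  rw [Real.norm_eq_abs, abs_mul, Real.abs_exp]
  exact abs_mul_exp_neg_le _ hσ

lemma integrable_sub_sq_mul_exp_neg_sq {σ : ℝ} (hσ : 0 < σ) :
    Integrable (fun x => (x - R) ^ 2 * Real.exp (-(x - R) ^ 2 / (2 * σ ^ 2))) μ := by
  refine Integrable.of_bound (by fun_prop) (2 * σ ^ 2) (.of_forall fun x => ?_)
  rw [Real.norm_eq_abs, abs_of_nonneg (by positivity)]
  exact sq_mul_exp_neg_le _ hσ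

lemma integral_mul_exp_neg_sq {σ : ℝ} (hσ : 0 < σ) :
    ∫ x, x * Real.exp (-(x - R) ^ 2 / (2 * σ ^ 2)) ∂μ =
      (∫ x, (x - R) * Real.exp (-(x - R) ^ 2 / (2 * σ ^ 2)) ∂μ)
        + R * ∫ x, Real.exp (-(x - R) ^ 2 / (2 * σ ^ 2)) ∂μ := by
  rw [← integral_const_mul, ← integral_add (integrable_sub_mul_exp_neg_sq μ R hσ)
    ((integrable_exp_neg_sq μ R σ).const_mul R)]
  congr 1 with x
  ring

lemma integral_sq_mul_exp_neg_sq {σ : ℝ} (hσ : 0 < σ) :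
    ∫ x, x ^ 2 * Real.exp (-(x - R) ^ 2 / (2 * σ ^ 2)) ∂μ =
      (∫ x, (x - R) ^ 2 * Real.exp (-(x - R) ^ 2 / (2 * σ ^ 2)) ∂μ)
        + 2 * R * (∫ x, (x - R) * Real.exp (-(x - R) ^ 2 / (2 * σ ^ 2)) ∂μ)
        + R ^ 2 * ∫ x, Real.exp (-(x - R) ^ 2 / (2 * σ ^ 2)) ∂μ := by
  have h0 := (integrable_exp_neg_sq μ R σ).const_mul (R ^ 2)
  have h1 := (integrable_sub_mul_exp_neg_sq μ R hσ).const_mul (2 * R)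
  have h2 := integrable_sub_sq_mul_exp_neg_sq μ R hσ
  rw [← integral_const_mul, ← integral_const_mul, ← integral_add h2 h1,
    ← integral_add (by exact h2.add h1) h0]
  congr 1 with x
  ring

lemma hasDerivAt_integral_exp_neg_sq_center {σ : ℝ} (hσ : 0 < σ) :
    HasDerivAt (fun r => ∫ x, Real.exp (-(x - r) ^ 2 / (2 * σ ^ 2)) ∂μ)
      ((∫ x, (x - R) * Real.exp (-(x - R) ^ 2 / (2 * σ ^ 2)) ∂μ) / σ ^ 2) R := by
  rw [← integral_div]
  refine (hasDerivAt_integral_of_dominated_loc_of_deriv_le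
    (F' := fun r x => (x - r) * Real.exp (-(x - r) ^ 2 / (2 * σ ^ 2)) / σ ^ 2)
    (bound := fun _ => (1 + 2 * σ ^ 2) / σ ^ 2) Filter.univ_mem
    (.of_forall fun r => by fun_prop) (integrable_exp_neg_sq μ R σ) (by fun_prop)
    (.of_forall fun x r _ => ?_) (integrable_const _) (.of_forall fun x r _ => ?_)).2
  · rw [Real.norm_eq_abs, abs_div, abs_mul, Real.abs_exp, abs_of_pos (by positivity : 0 < σ ^ 2)]
    gcongr
    exact abs_mul_exp_neg_le _ hσ
  · have h : HasDerivAt (fun r => -(x - r) ^ 2 / (2 * σ ^ 2)) ((x - r) / σ ^ 2) r := by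
      have := ((((hasDerivAt_id r).const_sub x).pow 2).neg).div_const (2 * σ ^ 2)
      refine this.congr_deriv ?_
      simp
      field_simp
    refine h.exp.congr_deriv ?_
    ring

lemma hasDerivAt_integral_exp_neg_sq_width {σ : ℝ} (hσ : 0 < σ) :
    HasDerivAt (fun s => ∫ x, Real.exp (-(x - R) ^ 2 / (2 * s ^ 2)) ∂μ)
      ((∫ x, (x - R) ^ 2 * Real.exp (-(x - R) ^ 2 / (2 * σ ^ 2)) ∂μ) / σ ^ 3) σ := by
  rw [← integral_div]
  refine (hasDerivAt_integral_of_dominated_loc_of_deriv_le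
    (F' := fun s x => (x - R) ^ 2 * Real.exp (-(x - R) ^ 2 / (2 * s ^ 2)) / s ^ 3)
    (bound := fun _ => 4 / σ) (Ioi_mem_nhds (half_lt_self hσ))
    (.of_forall fun s => by fun_prop) (integrable_exp_neg_sq μ R σ) (by fun_prop)
    (.of_forall fun x s hs => ?_) (integrable_const _) (.of_forall fun x s hs => ?_)).2
  · have hs' : σ / 2 < s := hs
    have hs0 : 0 < s := by linarith
    rw [Real.norm_eq_abs, abs_of_nonneg (by positivity)]
    calc _ ≤ 2 * s ^ 2 / s ^ 3 :=
        div_le_div_of_nonneg_right (sq_mul_exp_neg_le _ hs0) (by positivity)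
      _ = 2 / s := by field_simp
      _ ≤ 4 / σ := by rw [div_le_div_iff₀ hs0 hσ]; linarith
  · have hs' : σ / 2 < s := hs
    have hs0 : 0 < s := by linarith
    have h : HasDerivAt (fun s => -(x - R) ^ 2 / (2 * s ^ 2)) ((x - R) ^ 2 / s ^ 3) s := by
      have := (hasDerivAt_const s (-(x - R) ^ 2)).div (((hasDerivAt_id s).pow 2).const_mul 2)
        (by simp; positivity)
      refine this.congr_deriv ?_
      simp
      field_simp
    refine h.exp.congr_deriv ?_
    ring

end GaussianIntegrals

section Prior

variable {ρ : ℝ}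


lemma Zpart_pos (hρ : ρ ∈ Set.Icc (0 : ℝ) 1) (R σ : ℝ) : 0 < Zpart ρ R σ := by
  have := isProbabilityMeasure_P0 hρ
  exact integral_exp_pos (integrable_exp_neg_sq (P0 ρ) R σ)

lemma hasDerivAt_log_Zpart_center (hρ : ρ ∈ Set.Icc (0 : ℝ) 1) (R : ℝ) {σ : ℝ} (hσ : 0 < σ) :
    HasDerivAt (fun r => Real.log (Zpart ρ r σ)) ((fa ρ R σ - R) / σ ^ 2) R := by
  have := isProbabilityMeasure_P0 hρ
  have hZ := (Zpart_pos hρ R σ).ne'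
  refine (HasDerivAt.log (hasDerivAt_integral_exp_neg_sq_center (P0 ρ) R hσ) hZ).congr_deriv ?_
  rw [fa, integral_mul_exp_neg_sq (P0 ρ) R hσ]
  change _ / Zpart ρ R σ = ((Zpart ρ R σ)⁻¹ * (_ + R * Zpart ρ R σ) - R) / σ ^ 2
  field_simp
  ring

lemma hasDerivAt_log_Zpart_width (hρ : ρ ∈ Set.Icc (0 : ℝ) 1) (R : ℝ) {σ : ℝ} (hσ : 0 < σ) :
    HasDerivAt (fun s => Real.log (Zpart ρ R s))
      ((fc ρ R σ + (fa ρ R σ - R) ^ 2) / σ ^ 3) σ := by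
  have := isProbabilityMeasure_P0 hρ
  have hZ := (Zpart_pos hρ R σ).ne'
  refine (HasDerivAt.log (hasDerivAt_integral_exp_neg_sq_width (P0 ρ) R hσ) hZ).congr_deriv ?_
  rw [fc, fa, integral_sq_mul_exp_neg_sq (P0 ρ) R hσ, integral_mul_exp_neg_sq (P0 ρ) R hσ]
  change _ / Zpart ρ R σ = ((Zpart ρ R σ)⁻¹ * (_ + _ + R ^ 2 * Zpart ρ R σ)
    - ((Zpart ρ R σ)⁻¹ * (_ + R * Zpart ρ R σ)) ^ 2
    + ((Zpart ρ R σ)⁻¹ * (_ + R * Zpart ρ R σ) - R) ^ 2) / σ ^ 3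
  field_simp
  ring

end Prior

/-- Differentiating a separable sum with respect to one coordinate. -/
lemma hasDerivAt_sum_update {ι : Type*} [Fintype ι] [DecidableEq ι] (g : ι → ℝ → ℝ) (v : ι → ℝ)
    (i : ι) {d : ℝ} (h : HasDerivAt (g i) d (v i)) :
    HasDerivAt (fun t => ∑ j, g j (Function.update v i t j)) d (v i) := by
  have key : ∀ j ∈ Finset.univ, HasDerivAt (fun t => g j (Function.update v i t j))
      (if j = i then d else 0) (v i) := by
    intro j _
    rcases eq_or_ne j i with rfl | hj
    · simpa using h
    · simpa [hj] using hasDerivAt_const (v i) (g j (v j))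
  simpa using HasDerivAt.fun_sum key

section BetheFreeEnergy

variable {ρ : ℝ} {M N : ℕ} (F : Fin M → Fin N → ℝ) (y : Fin M → ℝ) {Δ : ℝ}
  (R Sv a c : Fin N → ℝ) (i : Fin N)

lemma hasDerivAt_FB_R (hρ : ρ ∈ Set.Icc (0 : ℝ) 1) (hS : 0 < Sv i) :
    HasDerivAt (fun t => FB ρ F y Δ (Function.update R i t) Sv a c)
      ((a i - fa ρ (R i) (Sv i)) / Sv i ^ 2) (R i) := by
  have hq : HasDerivAt (fun r => (c i + (a i - r) ^ 2) / (2 * Sv i ^ 2))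
      ((R i - a i) / Sv i ^ 2) (R i) := by
    refine (((((hasDerivAt_id (R i)).const_sub (a i)).pow 2).const_add (c i)).div_const
      (2 * Sv i ^ 2)).congr_deriv ?_
    simp
    field_simp
    ring
  refine ((hasDerivAt_sum_update (fun j r => Real.log (Zpart ρ r (Sv j))
    + (c j + (a j - r) ^ 2) / (2 * Sv j ^ 2)) R i
    ((hasDerivAt_log_Zpart_center hρ (R i) hS).add hq)).const_sub _).congr_deriv ?_
  ring

lemma hasDerivAt_FB_Sv (hρ : ρ ∈ Set.Icc (0 : ℝ) 1) (hS : 0 < Sv i) :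
    HasDerivAt (fun t => FB ρ F y Δ R (Function.update Sv i t) a c)
      ((c i + (a i - R i) ^ 2 - (fc ρ (R i) (Sv i) + (fa ρ (R i) (Sv i) - R i) ^ 2))
        / Sv i ^ 3) (Sv i) := by
  have hq : HasDerivAt (fun s => (c i + (a i - R i) ^ 2) / (2 * s ^ 2))
      (-(c i + (a i - R i) ^ 2) / Sv i ^ 3) (Sv i) := by
    refine ((hasDerivAt_const (Sv i) (c i + (a i - R i) ^ 2)).div
      (((hasDerivAt_id (Sv i)).pow 2).const_mul 2) (by simp; positivity)).congr_deriv ?_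
    simp
    field_simp
    ring
  refine ((hasDerivAt_sum_update (fun j s => Real.log (Zpart ρ (R j) s)
    + (c j + (a j - R j) ^ 2) / (2 * s ^ 2)) Sv i
    ((hasDerivAt_log_Zpart_width hρ (R i) hS).add hq)).const_sub _).congr_deriv ?_
  ring

lemma hasDerivAt_FB_a :
    HasDerivAt (fun t => FB ρ F y Δ R Sv (Function.update a i t) c)
      ((R i - a i) / Sv i ^ 2 - (∑ μ, F μ i * (y μ - ∑ j, F μ j * a j)) / Δ) (a i) := by
  have hq : HasDerivAt (fun s => Real.log (Zpart ρ (R i) (Sv i))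
      + (c i + (s - R i) ^ 2) / (2 * Sv i ^ 2)) ((a i - R i) / Sv i ^ 2) (a i) := by
    refine ((((((hasDerivAt_id (a i)).sub_const (R i)).pow 2).const_add (c i)).div_const
      (2 * Sv i ^ 2)).const_add _).congr_deriv ?_
    simp
    field_simp
  have hl : ∀ μ ∈ Finset.univ,
      HasDerivAt (fun t => (y μ - ∑ j, F μ j * Function.update a i t j) ^ 2)
        (-2 * (F μ i * (y μ - ∑ j, F μ j * a j))) (a i) := by
    intro μ _
    refine (((hasDerivAt_sum_update (fun j s => F μ j * s) a i
      ((hasDerivAt_id (a i)).const_mul (F μ i))).const_sub (y μ)).pow 2).congr_deriv ?_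
    simp
    ring
  refine (((((HasDerivAt.fun_sum hl).const_mul (1 / (2 * Δ))).add_const _).add_const _).sub
    (hasDerivAt_sum_update (fun j s => Real.log (Zpart ρ (R j) (Sv j))
      + (c j + (s - R j) ^ 2) / (2 * Sv j ^ 2)) a i hq)).congr_deriv ?_
  rw [← Finset.mul_sum]
  ring

lemma hasDerivAt_FB_c (hΔ : 0 < Δ) (hV : ∀ μ, 0 < Δ + ∑ j, F μ j ^ 2 * c j) :
    HasDerivAt (fun t => FB ρ F y Δ R Sv a (Function.update c i t))
      ((∑ μ, F μ i ^ 2 / (Δ + ∑ j, F μ j ^ 2 * c j) - 1 / Sv i ^ 2) / 2) (c i) := by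
  have hq : HasDerivAt (fun s => Real.log (Zpart ρ (R i) (Sv i))
      + (s + (a i - R i) ^ 2) / (2 * Sv i ^ 2)) (1 / (2 * Sv i ^ 2)) (c i) :=
    (((hasDerivAt_id (c i)).add_const _).div_const _).const_add _
  have hl : ∀ μ ∈ Finset.univ,
      HasDerivAt (fun t => Real.log (1 + (∑ j, F μ j ^ 2 * Function.update c i t j) / Δ))
        (F μ i ^ 2 / (Δ + ∑ j, F μ j ^ 2 * c j)) (c i) := by
    intro μ _
    have hpos := (hV μ).ne'
    have heq : 1 + (∑ j, F μ j ^ 2 * c j) / Δ = (Δ + ∑ j, F μ j ^ 2 * c j) / Δ := by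
      field_simp
    refine ((((hasDerivAt_sum_update (fun j s => F μ j ^ 2 * s) c i
      ((hasDerivAt_id (c i)).const_mul (F μ i ^ 2))).div_const Δ).const_add 1).log
        ?_).congr_deriv ?_
    · simp only [Function.update_eq_self, heq]
      positivity
    · simp only [Function.update_eq_self, heq]
      field_simp
  refine ((((HasDerivAt.fun_sum hl).const_mul (1 / 2)).const_add _).sub
    (hasDerivAt_sum_update (fun j s => Real.log (Zpart ρ (R j) (Sv j))
      + (s + (a j - R j) ^ 2) / (2 * Sv j ^ 2)) c i hq)).congr_deriv ?_
  ring

end BetheFreeEnergy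

/-- Bethe stationary points are AMP fixed points: a point `(R,Σ,a,c)` with
all `Σ_i > 0` and `Δ + ∑_j F_{μj}² c_j > 0` is a stationary point of the unconstrained
Bethe free energy iff the AMP fixed-point equations (i)–(iv) hold. -/
theorem stmt9 (ρ : ℝ) (hρ : ρ ∈ Set.Icc (0 : ℝ) 1) {M N : ℕ}
    (F : Fin M → Fin N → ℝ) (y : Fin M → ℝ) (Δ : ℝ) (hΔ : 0 < Δ)
    (R Sv a c : Fin N → ℝ) (hS : ∀ i, 0 < Sv i)
    (hV : ∀ μ, 0 < Δ + ∑ j, F μ j ^ 2 * c j) :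
    ((∀ i, HasDerivAt (fun t => FB ρ F y Δ (Function.update R i t) Sv a c) 0 (R i)) ∧
     (∀ i, HasDerivAt (fun t => FB ρ F y Δ R (Function.update Sv i t) a c) 0 (Sv i)) ∧
     (∀ i, HasDerivAt (fun t => FB ρ F y Δ R Sv (Function.update a i t) c) 0 (a i)) ∧
     (∀ i, HasDerivAt (fun t => FB ρ F y Δ R Sv a (Function.update c i t)) 0 (c i)))
    ↔ (∀ i,
        1 / Sv i ^ 2 = ∑ μ, F μ i ^ 2 / (Δ + ∑ j, F μ j ^ 2 * c j) ∧
        R i = a i + Sv i ^ 2 / Δ * ∑ μ, F μ i * (y μ - ∑ j, F μ j * a j) ∧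
        a i = fa ρ (R i) (Sv i) ∧
        c i = fc ρ (R i) (Sv i)) := by
  have zero_iff : ∀ {f : ℝ → ℝ} {d x : ℝ}, HasDerivAt f d x → (HasDerivAt f 0 x ↔ d = 0) :=
    fun h => ⟨fun h0 => h.unique h0, fun hd => hd ▸ h⟩
  simp only [← forall_and]
  refine forall_congr' fun i => ?_
  have hSi := hS i
  rw [zero_iff (hasDerivAt_FB_R F y R Sv a c i hρ hSi),
    zero_iff (hasDerivAt_FB_Sv F y R Sv a c i hρ hSi),
    zero_iff (hasDerivAt_FB_a F y R Sv a c i),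
    zero_iff (hasDerivAt_FB_c F y R Sv a c i hΔ hV)]
  have hmean : (a i - fa ρ (R i) (Sv i)) / Sv i ^ 2 = 0 ↔ a i = fa ρ (R i) (Sv i) := by
    rw [div_eq_zero_iff, or_iff_left (by positivity), sub_eq_zero]
  have hfield : (R i - a i) / Sv i ^ 2 - (∑ μ, F μ i * (y μ - ∑ j, F μ j * a j)) / Δ = 0 ↔
      R i = a i + Sv i ^ 2 / Δ * ∑ μ, F μ i * (y μ - ∑ j, F μ j * a j) := by
    rw [sub_eq_zero, div_eq_iff (by positivity), sub_eq_iff_eq_add']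
    ring_nf
  have hwidth : (∑ μ, F μ i ^ 2 / (Δ + ∑ j, F μ j ^ 2 * c j) - 1 / Sv i ^ 2) / 2 = 0 ↔
      1 / Sv i ^ 2 = ∑ μ, F μ i ^ 2 / (Δ + ∑ j, F μ j ^ 2 * c j) := by
    rw [div_eq_zero_iff, or_iff_left two_ne_zero, sub_eq_zero, eq_comm]
  have hvar : a i = fa ρ (R i) (Sv i) →
      ((c i + (a i - R i) ^ 2 - (fc ρ (R i) (Sv i) + (fa ρ (R i) (Sv i) - R i) ^ 2))
        / Sv i ^ 3 = 0 ↔ c i = fc ρ (R i) (Sv i)) := by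
    intro ha
    rw [div_eq_zero_iff, or_iff_left (by positivity), ← ha, add_sub_add_right_eq_sub, sub_eq_zero]
  rw [hmean, hfield, hwidth]
  tauto
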